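/- For integers $m \ge 0$, $n \ge 0$ and $0 \le \ell \le n$ with $\ell + n$ even, the connection coefficient $c_{\ell,n}^m = (2\ell+2m+1)(2m+2)\sqrt{\frac{(\ell+2m)!}{(\ell+m+\frac{1}{2})\,\ell!}\cdot\frac{(n+m+\frac{5}{2})\,n!}{(n+2m+4)!}}$ satisfies $c_{\ell,n}^m = \frac{\langle \tilde P_{\ell+m}^m, (1-x^2)\, \tilde P_{n+m+2}^{m+2} \cdot (1-x^2)^{-1} \rangle}{\langle \tilde P_{\ell+m}^m, \tilde P_{\ell+m}^m\rangle}$, i.e. it is the coefficient of $\tilde P_{\ell+m}^m$ in the expansion of $\tilde P_{n+m+2}^{m+2}$ in the basis $\{\tilde P_{\ell+m}^m\}_{\ell \ge 0}$ on $L^2([-1,1], dx)$. -/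

import Mathlib

open scoped Nat

/-- The associated Legendre function `P_ℓ^m` (Condon–Shortley phase), defined via the
Rodrigues formula `P_ℓ(x) = 1/(2^ℓ ℓ!) dℓ/dxℓ (x²-1)^ℓ` and
`P_ℓ^m(x) = (-1)^m (1-x²)^{m/2} dm/dxm P_ℓ(x)`. -/
noncomputable def assocLegendre (ℓ m : ℕ) (x : ℝ) : ℝ :=
  (-1 : ℝ) ^ m * (1 - x ^ 2) ^ ((m : ℝ) / 2) *
    iteratedDeriv m
      (fun y : ℝ => (1 / (2 ^ ℓ * (ℓ ! : ℝ))) *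
        iteratedDeriv ℓ (fun t : ℝ => (t ^ 2 - 1) ^ ℓ) y) x

/-- The normalized associated Legendre function `P̃_ℓ^m`, orthonormal in
`L²([-1,1], dx)` for fixed `m ≥ 0`; here `i^{m+|m|} = (-1)^m`. -/
noncomputable def tildeP (ℓ m : ℕ) (x : ℝ) : ℝ :=
  (-1 : ℝ) ^ m * Real.sqrt (((ℓ : ℝ) + 1 / 2) * ((ℓ - m)! : ℝ) / ((ℓ + m)! : ℝ)) *
    assocLegendre ℓ m x

open Polynomial in
/-- The Legendre polynomial `P_N`, given by the Rodrigues formula. -/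
noncomputable def legendrePoly (N : ℕ) : ℝ[X] :=
  C (1 / (2 ^ N * (N ! : ℝ))) * derivative^[N] ((X ^ 2 - 1) ^ N)

/-- Integration of polynomials over `[-1, 1]`, as a linear functional. -/
noncomputable def polyIntegral : Polynomial ℝ →ₗ[ℝ] ℝ where
  toFun f := ∫ x in (-1 : ℝ)..1, f.eval x
  map_add' f g := by
    simp only [Polynomial.eval_add]
    exact intervalIntegral.integral_add (f.continuous.intervalIntegrable _ _)
      (g.continuous.intervalIntegrable _ _)
  map_smul' c f := by simp

namespace LegendreConnection

open Polynomial

lemma polyIntegral_apply (f : ℝ[X]) : polyIntegral f = ∫ x in (-1 : ℝ)..1, f.eval x := rfl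

lemma polyIntegral_derivative (f : ℝ[X]) :
    polyIntegral (derivative f) = f.eval 1 - f.eval (-1) := by
  rw [polyIntegral_apply]
  exact intervalIntegral.integral_eq_sub_of_hasDerivAt (fun x _ => f.hasDerivAt x)
    ((derivative f).continuous.intervalIntegrable _ _)

lemma polyIntegral_mul_derivative {f : ℝ[X]} (hf : 1 - X ^ 2 ∣ f) (g : ℝ[X]) :
    polyIntegral (f * derivative g) = -polyIntegral (derivative f * g) := by
  obtain ⟨c, rfl⟩ := hf
  have h := polyIntegral_derivative ((1 - X ^ 2) * c * g)
  rw [derivative_mul, map_add] at h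
  have h0 : ((1 - X ^ 2) * c * g).eval 1 - ((1 - X ^ 2) * c * g).eval (-1) = 0 := by simp
  linarith

/-- Repeated integration by parts without boundary terms. -/
lemma polyIntegral_mul_iterate_derivative (k : ℕ) {f : ℝ[X]} (hf : (1 - X ^ 2) ^ k ∣ f)
    (g : ℝ[X]) :
    polyIntegral (f * derivative^[k] g) = (-1) ^ k * polyIntegral (derivative^[k] f * g) := by
  induction k generalizing f with
  | zero => simp
  | succ k ih =>
    rw [Function.iterate_succ_apply', Function.iterate_succ_apply,
      polyIntegral_mul_derivative ((dvd_pow_self _ k.succ_ne_zero).trans hf),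
      ih (by simpa using pow_sub_one_dvd_derivative_of_pow_dvd hf)]
    ring

lemma natDegree_X_sq_sub_one_pow (N : ℕ) : ((X ^ 2 - 1 : ℝ[X]) ^ N).natDegree = 2 * N := by
  have h : (X ^ 2 - 1 : ℝ[X]).natDegree = 2 := natDegree_X_pow_sub_C (R := ℝ) (r := 1)
  rw [natDegree_pow, h, mul_comm]

lemma natDegree_legendrePoly_le (N : ℕ) : (legendrePoly N).natDegree ≤ N := by
  refine (natDegree_C_mul_le _ _).trans ((natDegree_iterate_derivative _ _).trans ?_)
  rw [natDegree_X_sq_sub_one_pow]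
  omega

lemma iterate_derivative_legendrePoly_ne_zero {m N : ℕ} (h : m ≤ N) :
    derivative^[m] (legendrePoly N) ≠ 0 := by
  have hmonic : ((X ^ 2 - 1 : ℝ[X]) ^ N).Monic :=
    (monic_X_pow_sub_C (1 : ℝ) two_ne_zero).pow N
  rw [legendrePoly, iterate_derivative_C_mul, ← Function.iterate_add_apply]
  refine mul_ne_zero (C_ne_zero.mpr (by positivity)) fun h0 => ?_
  have hc := congrArg (fun f : ℝ[X] => f.coeff (N - m)) h0
  simp only [coeff_iterate_derivative, coeff_zero, nsmul_eq_mul] at hc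
  rw [show N - m + (m + N) = 2 * N by omega, ← natDegree_X_sq_sub_one_pow,
    hmonic.coeff_natDegree, natDegree_X_sq_sub_one_pow, mul_one, Nat.cast_eq_zero,
    Nat.descFactorial_eq_zero_iff_lt] at hc
  omega

lemma polyIntegral_mul_legendrePoly {N : ℕ} {s : ℝ[X]} (hs : s.natDegree < N) :
    polyIntegral (s * legendrePoly N) = 0 := by
  have hdvd : (1 - X ^ 2 : ℝ[X]) ^ N ∣ (X ^ 2 - 1) ^ N :=
    pow_dvd_pow_of_dvd ⟨-1, by ring⟩ N
  have h := polyIntegral_mul_iterate_derivative N hdvd s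
  rw [iterate_derivative_eq_zero hs, mul_zero, map_zero] at h
  have h' : polyIntegral (derivative^[N] ((X ^ 2 - 1 : ℝ[X]) ^ N) * s) = 0 := by
    simpa using h.symm
  rw [legendrePoly, mul_left_comm, mul_comm s, ← smul_eq_C_mul, map_smul, h', smul_zero]

/-- `D^m P_{k+m}` is orthogonal, for the weight `(1 - X²)^m`, to polynomials of degree
less than `k`. -/
lemma polyIntegral_weight_mul_iterate_derivative {m k : ℕ} {r : ℝ[X]} (hr : r.natDegree < k) :
    polyIntegral ((1 - X ^ 2) ^ m * r * derivative^[m] (legendrePoly (k + m))) = 0 := by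
  rw [polyIntegral_mul_iterate_derivative m (Dvd.intro _ rfl), polyIntegral_mul_legendrePoly,
    mul_zero]
  have hw : ((1 - X ^ 2 : ℝ[X]) ^ m).natDegree ≤ m * 2 :=
    natDegree_pow_le_of_le m (by compute_degree)
  have h1 := natDegree_iterate_derivative ((1 - X ^ 2) ^ m * r) m
  have h2 := natDegree_mul_le (p := (1 - X ^ 2 : ℝ[X]) ^ m) (q := r)
  omega

lemma C_rodrigues (N : ℕ) :
    (C (1 / (2 ^ N * (N ! : ℝ))) : ℝ[X]) =
      C (1 / (2 ^ (N + 1) * ((N + 1)! : ℝ))) * ((N + 1) * 2) := by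
  have hc : (1 / (2 ^ N * (N ! : ℝ))) = 1 / (2 ^ (N + 1) * ((N + 1)! : ℝ)) * ((N + 1) * 2) := by
    rw [Nat.factorial_succ]
    push_cast
    field_simp
    ring
  rw [hc]
  simp only [map_mul, map_add, map_natCast, map_one, map_ofNat]

lemma derivative_rodrigues (N : ℕ) :
    derivative (C (1 / (2 ^ (N + 1) * ((N + 1)! : ℝ))) * (X ^ 2 - 1) ^ (N + 1)) =
      C (1 / (2 ^ N * (N ! : ℝ))) * (X ^ 2 - 1) ^ N * X := by
  rw [C_rodrigues N, derivative_C_mul, derivative_pow_succ, derivative_sub, derivative_one,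
    derivative_X_sq]
  simp only [map_add, map_natCast, map_one, map_ofNat]
  ring

lemma legendrePoly_eq (N : ℕ) :
    legendrePoly N = derivative^[N] (C (1 / (2 ^ N * (N ! : ℝ))) * (X ^ 2 - 1) ^ N) := by
  rw [legendrePoly, iterate_derivative_C_mul]

lemma derivative_legendrePoly (N : ℕ) :
    derivative (legendrePoly N) =
      derivative^[N + 1] (C (1 / (2 ^ N * (N ! : ℝ))) * (X ^ 2 - 1) ^ N) := by
  rw [Function.iterate_succ_apply', legendrePoly_eq]

lemma derivative_legendrePoly_succ (N : ℕ) :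
    derivative (legendrePoly (N + 1)) =
      X * derivative (legendrePoly N) + (N + 1 : ℝ[X]) * legendrePoly N := by
  rw [derivative_legendrePoly (N + 1), Function.iterate_succ_apply, derivative_rodrigues,
    iterate_derivative_mul_X, derivative_legendrePoly N, legendrePoly_eq N,
    Nat.add_sub_cancel, nsmul_eq_mul]
  push_cast
  ring

lemma X_mul_derivative_legendrePoly_succ (N : ℕ) :
    X * derivative (legendrePoly (N + 1)) =
      derivative (legendrePoly N) + (N + 1 : ℝ[X]) * legendrePoly (N + 1) := by
  have h : derivative (C (1 / (2 ^ (N + 1) * ((N + 1)! : ℝ))) * (X ^ 2 - 1) ^ (N + 1)) * X =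
      C (1 / (2 ^ N * (N ! : ℝ))) * (X ^ 2 - 1) ^ N +
        ((2 * (N + 1) : ℕ) : ℝ[X]) *
          (C (1 / (2 ^ (N + 1) * ((N + 1)! : ℝ))) * (X ^ 2 - 1) ^ (N + 1)) := by
    rw [derivative_rodrigues, C_rodrigues N]
    push_cast
    ring
  have h' := congrArg (derivative^[N + 1]) h
  rw [iterate_derivative_derivative_mul_X, iterate_map_add, iterate_derivative_natCast_mul,
    ← legendrePoly_eq, ← derivative_legendrePoly, ← derivative_legendrePoly, nsmul_eq_mul] at h'
  push_cast at h'
  linear_combination h'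

lemma derivative_legendrePoly_add_two (N : ℕ) :
    derivative (legendrePoly (N + 2)) =
      derivative (legendrePoly N) + ((2 * N + 3 : ℕ) : ℝ[X]) * legendrePoly (N + 1) := by
  rw [derivative_legendrePoly_succ, X_mul_derivative_legendrePoly_succ]
  push_cast
  ring

lemma iterate_derivative_legendrePoly_add_two (m N : ℕ) :
    derivative^[m + 1] (legendrePoly (N + 2)) =
      derivative^[m + 1] (legendrePoly N) +
        ((2 * N + 3 : ℕ) : ℝ[X]) * derivative^[m] (legendrePoly (N + 1)) := by
  rw [Function.iterate_succ_apply, derivative_legendrePoly_add_two, iterate_map_add,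
    iterate_derivative_natCast_mul, ← Function.iterate_succ_apply]

lemma X_mul_iterate_derivative_legendrePoly_succ (m k : ℕ) :
    X * derivative^[m + 1] (legendrePoly (k + m + 1)) =
      derivative^[m + 1] (legendrePoly (k + m)) +
        ((k + 1 : ℕ) : ℝ[X]) * derivative^[m] (legendrePoly (k + m + 1)) := by
  have h := congrArg (derivative^[m]) (X_mul_derivative_legendrePoly_succ (k + m))
  rw [mul_comm X, iterate_derivative_derivative_mul_X, iterate_map_add,
    ← Nat.cast_succ, iterate_derivative_natCast_mul, ← Function.iterate_succ_apply] at h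
  simp only [nsmul_eq_mul] at h
  push_cast at h ⊢
  linear_combination h

lemma natDegree_iterate_derivative_legendrePoly_le (m ℓ : ℕ) :
    (derivative^[m] (legendrePoly (ℓ + m))).natDegree ≤ ℓ := by
  have h1 := natDegree_iterate_derivative (legendrePoly (ℓ + m)) m
  have h2 := natDegree_legendrePoly_le (ℓ + m)
  omega

lemma polyIntegral_natCast_mul (c : ℕ) (f : ℝ[X]) :
    polyIntegral ((c : ℝ[X]) * f) = c * polyIntegral f := by
  rw [← nsmul_eq_mul, map_nsmul, nsmul_eq_mul]

/-- The weighted integral of `D^m P_{ℓ+m}` against `D^{m+1} P_{n+m+1}` does not depend on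
`n = ℓ + 2 * k`. -/
lemma polyIntegral_weight_mul_succ (m ℓ k : ℕ) :
    polyIntegral ((1 - X ^ 2) ^ m * derivative^[m] (legendrePoly (ℓ + m)) *
        derivative^[m + 1] (legendrePoly (ℓ + 2 * k + m + 1))) =
      (2 * ℓ + 2 * m + 1) * polyIntegral ((1 - X ^ 2) ^ m *
        derivative^[m] (legendrePoly (ℓ + m)) * derivative^[m] (legendrePoly (ℓ + m))) := by
  induction k with
  | zero =>
    obtain h0 | ⟨M, hM⟩ : ℓ + m = 0 ∨ ∃ M, ℓ + m = M + 1 := by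
      rcases h : ℓ + m with _ | M
      · exact Or.inl rfl
      · exact Or.inr ⟨M, rfl⟩
    · obtain ⟨rfl, rfl⟩ : ℓ = 0 ∧ m = 0 := by omega
      have h := derivative_legendrePoly_succ 0
      have h00 : derivative (legendrePoly 0) = 0 := by simp [legendrePoly]
      rw [h00] at h
      simp at h
      simp [h]
    · have hlow : polyIntegral ((1 - X ^ 2) ^ m * derivative^[m + 1] (legendrePoly M) *
          derivative^[m] (legendrePoly (ℓ + m))) = 0 := by
        have h1 := natDegree_iterate_derivative (legendrePoly M) (m + 1)
        have h2 := natDegree_legendrePoly_le M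
        rcases Nat.eq_zero_or_pos ℓ with rfl | hℓ
        · rw [iterate_derivative_eq_zero (by omega : (legendrePoly M).natDegree < m + 1)]
          simp
        · exact polyIntegral_weight_mul_iterate_derivative (by omega)
      rw [show ℓ + 2 * 0 + m + 1 = M + 2 by omega, iterate_derivative_legendrePoly_add_two,
        ← hM, mul_add, map_add, mul_right_comm, hlow, zero_add, mul_left_comm,
        polyIntegral_natCast_mul]
      have hM' : (ℓ : ℝ) + m = M + 1 := by exact_mod_cast hM
      push_cast
      congr 1
      linarith
  | succ k ih =>
    rw [← ih, show ℓ + 2 * (k + 1) + m + 1 = (ℓ + 2 * k + m + 1) + 2 by ring,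
      iterate_derivative_legendrePoly_add_two, mul_add, map_add, mul_left_comm,
      polyIntegral_natCast_mul,
      show ℓ + 2 * k + m + 1 + 1 = (ℓ + 2 * k + 2) + m by ring,
      polyIntegral_weight_mul_iterate_derivative, mul_zero, add_zero]
    have := natDegree_iterate_derivative_legendrePoly_le m ℓ
    omega

lemma polyIntegral_weight_succ_mul_add_two (m ℓ k : ℕ) :
    polyIntegral ((1 - X ^ 2) ^ (m + 1) * derivative^[m] (legendrePoly (ℓ + m)) *
        derivative^[m + 2] (legendrePoly (ℓ + 2 * k + m + 2))) =
      (2 * m + 2) * (2 * ℓ + 2 * m + 1) * polyIntegral ((1 - X ^ 2) ^ m *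
        derivative^[m] (legendrePoly (ℓ + m)) * derivative^[m] (legendrePoly (ℓ + m))) := by
  have hp := natDegree_iterate_derivative_legendrePoly_le m ℓ
  have hJ := polyIntegral_weight_mul_succ m ℓ k
  set p := derivative^[m] (legendrePoly (ℓ + m)) with hpdef
  have hX := X_mul_iterate_derivative_legendrePoly_succ m (ℓ + 2 * k + 1)
  rw [show ℓ + 2 * k + 1 + m + 1 = ℓ + 2 * k + m + 2 by ring,
    show ℓ + 2 * k + 1 + m = ℓ + 2 * k + m + 1 by ring] at hX
  have hp' := natDegree_derivative_le p
  have h1 : polyIntegral ((1 - X ^ 2) ^ (m + 1) * derivative p *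
      derivative^[m + 1] (legendrePoly (ℓ + 2 * k + m + 2))) = 0 := by
    rw [show ℓ + 2 * k + m + 2 = (ℓ + 2 * k + 1) + (m + 1) by ring]
    exact polyIntegral_weight_mul_iterate_derivative (by omega)
  have h2 : polyIntegral ((1 - X ^ 2) ^ m * p *
      derivative^[m] (legendrePoly (ℓ + 2 * k + m + 2))) = 0 := by
    rw [show ℓ + 2 * k + m + 2 = (ℓ + 2 * k + 2) + m by ring]
    exact polyIntegral_weight_mul_iterate_derivative (by omega)
  rw [Function.iterate_succ_apply', polyIntegral_mul_derivative
    (Dvd.dvd.mul_right (dvd_pow_self _ m.succ_ne_zero) _)]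
  have hexp : derivative ((1 - X ^ 2) ^ (m + 1) * p) *
        derivative^[m + 1] (legendrePoly (ℓ + 2 * k + m + 2)) =
      (1 - X ^ 2) ^ (m + 1) * derivative p *
        derivative^[m + 1] (legendrePoly (ℓ + 2 * k + m + 2)) -
      ((2 * m + 2 : ℕ) : ℝ[X]) * ((1 - X ^ 2) ^ m * p *
          derivative^[m + 1] (legendrePoly (ℓ + 2 * k + m + 1)) +
        ((ℓ + 2 * k + 1 + 1 : ℕ) : ℝ[X]) * ((1 - X ^ 2) ^ m * p *
          derivative^[m] (legendrePoly (ℓ + 2 * k + m + 2)))) := by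
    rw [derivative_mul, derivative_pow_succ]
    simp only [derivative_sub, derivative_one, derivative_X_pow, map_natCast, map_add, map_one]
    push_cast at hX ⊢
    linear_combination (-(2 * m + 2 : ℝ[X]) * (1 - X ^ 2) ^ m * p) * hX
  rw [hexp, map_sub, h1, polyIntegral_natCast_mul, map_add, polyIntegral_natCast_mul, h2, hJ]
  push_cast
  ring

lemma polyIntegral_weight_mul_sq_pos {m : ℕ} {p : ℝ[X]} (hp : p ≠ 0) :
    0 < polyIntegral ((1 - X ^ 2) ^ m * p * p) := by
  have hnonneg : ∀ x ∈ Set.Icc (-1 : ℝ) 1, 0 ≤ ((1 - X ^ 2 : ℝ[X]) ^ m * p * p).eval x := by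
    intro x hx
    have h : 0 ≤ 1 - x ^ 2 := by nlinarith [hx.1, hx.2]
    simp only [eval_mul, eval_pow, eval_sub, eval_one, eval_X, mul_assoc]
    exact mul_nonneg (pow_nonneg h m) (mul_self_nonneg _)
  have hw : (1 - X ^ 2 : ℝ[X]) ≠ 0 := fun h => by
    simpa using congrArg (eval 0) h
  have hne : (1 - X ^ 2 : ℝ[X]) ^ m * p * p ≠ 0 :=
    mul_ne_zero (mul_ne_zero (pow_ne_zero _ hw) hp) hp
  obtain ⟨c, hc, hroot⟩ : ∃ c ∈ Set.Icc (-1 : ℝ) 1,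
      ((1 - X ^ 2 : ℝ[X]) ^ m * p * p).eval c ≠ 0 := by
    by_contra! hall
    exact hne (eq_zero_of_infinite_isRoot _
      ((Set.Icc_infinite (by norm_num : (-1 : ℝ) < 1)).mono hall))
  rw [polyIntegral_apply]
  exact intervalIntegral.integral_pos (by norm_num) (Polynomial.continuousOn _)
    (fun x hx => hnonneg x (Set.Ioc_subset_Icc_self hx))
    ⟨c, hc, lt_of_le_of_ne (hnonneg c hc) hroot.symm⟩

lemma iteratedDeriv_eval (k : ℕ) (p : ℝ[X]) :
    iteratedDeriv k (fun x => p.eval x) = fun x => (derivative^[k] p).eval x := by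
  induction k generalizing p with
  | zero => simp
  | succ k ih =>
    rw [iteratedDeriv_succ', Function.iterate_succ_apply, ← ih]
    congr 1
    ext x
    exact p.deriv

lemma assocLegendre_eq (N m : ℕ) (x : ℝ) :
    assocLegendre N m x = (-1) ^ m * (1 - x ^ 2) ^ ((m : ℝ) / 2) *
      (derivative^[m] (legendrePoly N)).eval x := by
  have h := iteratedDeriv_eval N ((X ^ 2 - 1) ^ N)
  simp only [eval_pow, eval_sub, eval_X, eval_one] at h
  have h2 := iteratedDeriv_eval m (legendrePoly N)
  simp only [legendrePoly, eval_mul, eval_C] at h2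
  rw [assocLegendre, h, h2, legendrePoly]

lemma tildeP_eq (N m : ℕ) (x : ℝ) :
    tildeP N m x = √(((N : ℝ) + 1 / 2) * ((N - m)! : ℝ) / ((N + m)! : ℝ)) *
      ((1 - x ^ 2) ^ ((m : ℝ) / 2) * (derivative^[m] (legendrePoly N)).eval x) := by
  have h : ((-1 : ℝ) ^ m) * (-1) ^ m = 1 := by rw [← mul_pow]; simp
  rw [tildeP, assocLegendre_eq]
  linear_combination (√(((N : ℝ) + 1 / 2) * ((N - m)! : ℝ) / ((N + m)! : ℝ)) *
    ((1 - x ^ 2) ^ ((m : ℝ) / 2) * (derivative^[m] (legendrePoly N)).eval x)) * h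

lemma rpow_half_mul_rpow_half {y : ℝ} (hy : 0 ≤ y) {a b c : ℕ} (h : a + b = 2 * c) :
    y ^ ((a : ℝ) / 2) * y ^ ((b : ℝ) / 2) = y ^ c := by
  have h' : (a : ℝ) + b = 2 * c := by exact_mod_cast h
  rw [← Real.rpow_add_of_nonneg hy (by positivity) (by positivity), ← Real.rpow_natCast]
  congr 1
  linarith

lemma integral_tildeP_mul_tildeP (N M a b c : ℕ) (h : a + b = 2 * c) :
    (∫ x in (-1 : ℝ)..1, tildeP N a x * tildeP M b x) =
      √(((N : ℝ) + 1 / 2) * ((N - a)! : ℝ) / ((N + a)! : ℝ)) *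
        √(((M : ℝ) + 1 / 2) * ((M - b)! : ℝ) / ((M + b)! : ℝ)) *
        polyIntegral ((1 - X ^ 2) ^ c * derivative^[a] (legendrePoly N) *
          derivative^[b] (legendrePoly M)) := by
  rw [polyIntegral_apply, ← intervalIntegral.integral_const_mul]
  refine intervalIntegral.integral_congr fun x hx => ?_
  rw [Set.uIcc_of_le (by norm_num)] at hx
  have hy : 0 ≤ 1 - x ^ 2 := by nlinarith [hx.1, hx.2]
  simp only [tildeP_eq, eval_mul, eval_pow, eval_sub, eval_one, eval_X,
    ← rpow_half_mul_rpow_half hy h]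
  ring

lemma weight_mul_tildeP_div_weight {N m : ℕ} (hm : m ≠ 0) (x : ℝ) :
    (1 - x ^ 2) * tildeP N m x / (1 - x ^ 2) = tildeP N m x := by
  by_cases hx : 1 - x ^ 2 = 0
  · rw [tildeP_eq, hx, Real.zero_rpow (by positivity)]
    simp
  · exact mul_div_cancel_left₀ _ hx

end LegendreConnection

/-- the explicit spherical harmonic connection coefficient equals the
expansion coefficient of `P̃_{n+m+2}^{m+2}` in the basis `{P̃_{ℓ+m}^m}`. -/
theorem sph_connection_coefficient (m n ℓ : ℕ) (hln : ℓ ≤ n) (hpar : Even (ℓ + n)) :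
    (2 * (ℓ : ℝ) + 2 * m + 1) * (2 * (m : ℝ) + 2) *
      Real.sqrt
        ((((ℓ + 2 * m)! : ℝ) / (((ℓ : ℝ) + m + 1 / 2) * (ℓ ! : ℝ))) *
          ((((n : ℝ) + m + 5 / 2) * (n ! : ℝ)) / ((n + 2 * m + 4)! : ℝ))) =
    (∫ x in (-1 : ℝ)..1,
        tildeP (ℓ + m) m x * ((1 - x ^ 2) * tildeP (n + m + 2) (m + 2) x / (1 - x ^ 2))) /
      (∫ x in (-1 : ℝ)..1, tildeP (ℓ + m) m x * tildeP (ℓ + m) m x) := by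
  obtain ⟨k, rfl⟩ : ∃ k, n = ℓ + 2 * k := by
    obtain ⟨j, hj⟩ := hpar
    exact ⟨j - ℓ, by omega⟩
  simp only [LegendreConnection.weight_mul_tildeP_div_weight (Nat.succ_ne_zero (m + 1))]
  rw [LegendreConnection.integral_tildeP_mul_tildeP _ _ m (m + 2) (m + 1) (by ring),
    LegendreConnection.integral_tildeP_mul_tildeP _ _ m m m (by ring),
    LegendreConnection.polyIntegral_weight_succ_mul_add_two]
  have hH := LegendreConnection.polyIntegral_weight_mul_sq_pos (m := m)
    (LegendreConnection.iterate_derivative_legendrePoly_ne_zero (Nat.le_add_left m ℓ))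
  set H := polyIntegral ((1 - Polynomial.X ^ 2) ^ m *
    Polynomial.derivative^[m] (legendrePoly (ℓ + m)) *
      Polynomial.derivative^[m] (legendrePoly (ℓ + m)))
  rw [show ℓ + m - m = ℓ by omega, show ℓ + m + m = ℓ + 2 * m by ring,
    show ℓ + 2 * k + m + 2 - (m + 2) = ℓ + 2 * k by omega,
    show ℓ + 2 * k + m + 2 + (m + 2) = ℓ + 2 * k + 2 * m + 4 by ring]
  set A : ℝ := ((ℓ + m : ℕ) + 1 / 2) * (ℓ ! : ℝ) / ((ℓ + 2 * m)! : ℝ) with hA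
  set B : ℝ := ((ℓ + 2 * k + m + 2 : ℕ) + 1 / 2) * ((ℓ + 2 * k)! : ℝ) /
    ((ℓ + 2 * k + 2 * m + 4)! : ℝ) with hB
  have hApos : 0 < √A := Real.sqrt_pos.mpr (by positivity)
  have hratio : (((ℓ + 2 * m)! : ℝ) / (((ℓ : ℝ) + m + 1 / 2) * (ℓ ! : ℝ))) *
      (((((ℓ + 2 * k : ℕ) : ℝ) + m + 5 / 2) * ((ℓ + 2 * k)! : ℝ)) /
        ((ℓ + 2 * k + 2 * m + 4)! : ℝ)) = B / A := by
    rw [hA, hB]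
    push_cast
    field_simp
    ring
  rw [hratio, Real.sqrt_div' _ (by positivity)]
  field_simp
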